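/- arXiv:1304.2328 — 2 statements merged into one kernel-verified Lean document; each statement's English description precedes it below -/
import Mathlib

section
/- Let X ∈ M_{n,m}(ℂ) have singular values σ₁ ≥ σ₂ ≥ … ≥ σ_{min(m,n)} ≥ 0 and fix 1 ≤ k ≤ min(m,n). Let r be the largest index with 1 ≤ r < k such that σ_r > (Σ_{i=r+1}^{min(m,n)} σ_i)/(k−r), taking r = 0 if no such index exists or if k = 1, and set σ̃ := (Σ_{i=r+1}^{min(m,n)} σ_i)/(k−r). Then the dual norm of the (k,2)-norm satisfies ‖X‖_{(k,2)}° = sqrt( Σ_{i=1}^r σ_i² + (k−r)σ̃² ). -/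
open scoped Kronecker ComplexOrder
open Matrix

namespace Ent

variable {ι κ : Type*} [Fintype ι] [Fintype κ]

/-- Inner product ⟨v,w⟩ = Σᵢ conj(v i) * (w i) (conjugate-linear in the first argument). -/
noncomputable def vinner (v w : ι → ℂ) : ℂ := dotProduct (star v) w

/-- An elementary (product) tensor a ⊗ b in ℂ^ι ⊗ ℂ^κ. -/
def prodVec (a : ι → ℂ) (b : κ → ℂ) : ι × κ → ℂ := fun p => a p.1 * b p.2

/-- `v` has Schmidt rank at most `k`. -/
def SchmidtRankLE (k : ℕ) (v : ι × κ → ℂ) : Prop :=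
  ∃ (a : Fin k → ι → ℂ) (b : Fin k → κ → ℂ), v = ∑ i, prodVec (a i) (b i)

/-- The rank-one operator |v⟩⟨w|. -/
noncomputable def ketBra (v : ι → ℂ) (w : κ → ℂ) : Matrix ι κ ℂ :=
  Matrix.vecMulVec v (star w)

/-- A finite family of vectors is orthonormal. -/
def Orthonormal' {N : Type*} [DecidableEq N] (v : N → ι → ℂ) : Prop :=
  ∀ i j, vinner (v i) (v j) = if i = j then 1 else 0

/-- The S(k)-norm of `X ∈ M_ι ⊗ M_κ`. -/
noncomputable def SkNorm (k : ℕ) (X : Matrix (ι × κ) (ι × κ) ℂ) : ℝ :=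
  sSup { r | ∃ v w : ι × κ → ℂ, vinner v v = 1 ∧ vinner w w = 1 ∧
    SchmidtRankLE k v ∧ SchmidtRankLE k w ∧
    r = ‖vinner v (X.mulVec w)‖ }

/-- The product numerical radius r_k^⊗. -/
noncomputable def prodRad (k : ℕ) (Y : Matrix (ι × κ) (ι × κ) ℂ) : ℝ :=
  sSup { r | ∃ v : ι × κ → ℂ, vinner v v = 1 ∧ SchmidtRankLE k v ∧
    r = ‖vinner v (Y.mulVec v)‖ }

/-- The norm ‖·‖_{γ,k}. -/
noncomputable def gammaNorm (k : ℕ) (X : Matrix (ι × κ) (ι × κ) ℂ) : ℝ :=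
  sInf { r | ∃ (N : ℕ) (c : Fin N → ℂ) (v w : Fin N → (ι × κ → ℂ)),
    (∀ i, vinner (v i) (v i) = 1 ∧ vinner (w i) (w i) = 1 ∧
      SchmidtRankLE k (v i) ∧ SchmidtRankLE k (w i)) ∧
    X = ∑ i, c i • ketBra (v i) (w i) ∧
    r = ∑ i, ‖c i‖ }

/-- `ρ` is a density matrix. -/
def IsDensity (ρ : Matrix ι ι ℂ) : Prop := ρ.PosSemidef ∧ ρ.trace = 1

/-- `ρ` has Schmidt number at most `k`: it is a convex combination of projections onto
unit vectors of Schmidt rank at most `k`. -/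
def SchmidtNumLE (k : ℕ) (ρ : Matrix (ι × κ) (ι × κ) ℂ) : Prop :=
  ∃ (N : ℕ) (p : Fin N → ℝ) (v : Fin N → (ι × κ → ℂ)),
    (∀ i, 0 ≤ p i ∧ vinner (v i) (v i) = 1 ∧ SchmidtRankLE k (v i)) ∧
    (∑ i, p i) = 1 ∧ ρ = ∑ i, p i • ketBra (v i) (v i)

/-- The robustness norm R_k on Hermitian operators. -/
noncomputable def Rk (k : ℕ) (Y : Matrix (ι × κ) (ι × κ) ℂ) : ℝ :=
  sInf { r | ∃ (c₁ c₂ : ℝ) (ρ₁ ρ₂ : Matrix (ι × κ) (ι × κ) ℂ),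
    0 ≤ c₁ ∧ 0 ≤ c₂ ∧ IsDensity ρ₁ ∧ IsDensity ρ₂ ∧
    SchmidtNumLE k ρ₁ ∧ SchmidtNumLE k ρ₂ ∧
    Y = c₁ • ρ₁ - c₂ • ρ₂ ∧ r = c₁ + c₂ }

/-- `Y` is k-block positive: ⟨v|Y|v⟩ ≥ 0 for every unit vector of Schmidt rank at most `k`. -/
def KBlockPos (k : ℕ) (Y : Matrix (ι × κ) (ι × κ) ℂ) : Prop :=
  ∀ v : ι × κ → ℂ, vinner v v = 1 → SchmidtRankLE k v →
    0 ≤ (vinner v (Y.mulVec v)).re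

/-- Dual of a norm on matrices, w.r.t. the Hilbert–Schmidt inner product ⟨W,X⟩ = Tr(Wᴴ X). -/
noncomputable def dualNormM (f : Matrix ι κ ℂ → ℝ) (X : Matrix ι κ ℂ) : ℝ :=
  sSup { r | ∃ W : Matrix ι κ ℂ, f W ≤ 1 ∧ r = ‖(Wᴴ * X).trace‖ }

/-- Dual of a norm, computed in the real Hilbert space of Hermitian matrices with the
Hilbert–Schmidt inner product ⟨W,Y⟩ = Tr(WY). -/
noncomputable def dualNormHerm (f : Matrix ι ι ℂ → ℝ) (Y : Matrix ι ι ℂ) : ℝ :=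
  sSup { r | ∃ W : Matrix ι ι ℂ, W.IsHermitian ∧ f W ≤ 1 ∧ r = |((W * Y).trace).re| }

/-- The Frobenius norm of a matrix. -/
noncomputable def frobNorm (X : Matrix ι κ ℂ) : ℝ :=
  Real.sqrt (∑ i, ∑ j, Complex.normSq (X i j))

/-- The (k,2)-norm: ‖X‖_{(k,2)} = sup { |Tr(XY)| : rank Y ≤ k, ‖Y‖_F ≤ 1 }. -/
noncomputable def kNorm (k : ℕ) (X : Matrix ι κ ℂ) : ℝ :=
  sSup { r | ∃ Y : Matrix κ ι ℂ, Y.rank ≤ k ∧ frobNorm Y ≤ 1 ∧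
    r = ‖(X * Y).trace‖ }

/-- The trace norm: the sum of the singular values, i.e. of the square roots of the
eigenvalues of Xᴴ X. -/
noncomputable def traceNorm [DecidableEq κ] (X : Matrix ι κ ℂ) : ℝ :=
  ∑ i, Real.sqrt ((Matrix.isHermitian_conjTranspose_mul_self X).eigenvalues i)

/-- The s(k) vector norm: sup of |⟨u,w⟩| over unit vectors u of Schmidt rank at most k. -/
noncomputable def skVecNorm (k : ℕ) (w : ι × κ → ℂ) : ℝ :=
  sSup { r | ∃ u : ι × κ → ℂ, vinner u u = 1 ∧ SchmidtRankLE k u ∧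
    r = ‖vinner u w‖ }

/-- Dual of a norm on vectors. -/
noncomputable def dualNormV (f : (ι × κ → ℂ) → ℝ) (v : ι × κ → ℂ) : ℝ :=
  sSup { r | ∃ w : ι × κ → ℂ, f w ≤ 1 ∧ r = ‖vinner w v‖ }

/-- The realignment map, L(X)_{(i,k),(j,l)} = X_{(i,j),(k,l)}. -/
def realign {m n : ℕ} (X : Matrix (Fin m × Fin n) (Fin m × Fin n) ℂ) :
    Matrix (Fin m × Fin m) (Fin n × Fin n) ℂ :=
  fun p q => X (p.1, q.1) (p.2, q.2)

/-- The projective tensor norm on M_{m,n} ⊗ M_{m,n}. -/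
noncomputable def projNorm {m n : ℕ} (Z : Matrix (Fin m × Fin m) (Fin n × Fin n) ℂ) : ℝ :=
  sInf { r | ∃ (N : ℕ) (A B : Fin N → Matrix (Fin m) (Fin n) ℂ),
    Z = ∑ i, A i ⊗ₖ B i ∧ r = ∑ i, traceNorm (A i) * traceNorm (B i) }

/-!
The matrices `W = ∑ i, τ i |u i⟩⟨w i|` sharing the singular vectors of `X` reduce the dual norm to a
problem about vectors. Let `H` be the set of the `r` leading indices and let `τ` agree with `σ` on
`H` and be constantly `σ̃` off `H`; then
`∑ i, τ i * σ i = ∑ i ∈ H, σ i ^ 2 + (k - r) * σ̃ ^ 2 =: D`.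

* Lower bound: a `Y` of rank at most `k` sees the singular values `τ` with weights `p i ∈ [0, 1]` of
  total at most `k` (the squared lengths of the projections of the `w i` to the range of `Y`), so
  `‖W‖_{(k,2)}² ≤ D`, and `W / √D` is a test matrix with `⟨W / √D, X⟩ = √D`.
* Upper bound: for a test matrix `W` put `a i = |⟨u i, W w i⟩|`. Off `H` the weights `σ i` are at
  most `σ̃` and add up to `(k - r) * σ̃`, so moving them onto the `k - r` largest `a i` gives
  `|⟨W, X⟩| ≤ ∑ i, σ i * a i ≤ ∑ i ∈ T, τ i * a i` for some `T` of size at most `k`. Conclude by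
  Cauchy–Schwarz, since `∑ i ∈ T, a i ^ 2 ≤ ‖W‖_{(k,2)}²`.
-/

open Finset (Ico range)
open WithLp (toLp)

section WeightedSums

variable {N : Type*}

lemma sum_mul_le_of_threshold {S T : Finset N} (hTS : T ⊆ S) {p a : N → ℝ} {c t K : ℝ}
    (ht : 0 ≤ t) (hT : ∀ i ∈ T, t ≤ a i) (hST : ∀ i ∈ S, i ∉ T → a i ≤ t)
    (hp0 : ∀ i ∈ S, 0 ≤ p i) (hpc : ∀ i ∈ T, p i ≤ c) (hp : ∑ i ∈ S, p i ≤ K * c) :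
    ∑ i ∈ S, p i * a i ≤ c * (∑ i ∈ T, a i + (K - T.card) * t) := by
  classical
  have outside : ∑ i ∈ S \ T, p i * (a i - t) ≤ 0 := by
    refine Finset.sum_nonpos fun i hi => ?_
    obtain ⟨hiS, hiT⟩ := Finset.mem_sdiff.1 hi
    exact mul_nonpos_of_nonneg_of_nonpos (hp0 i hiS) (sub_nonpos.2 (hST i hiS hiT))
  have inside : ∑ i ∈ T, p i * (a i - t) ≤ ∑ i ∈ T, c * (a i - t) :=
    Finset.sum_le_sum fun i hi => mul_le_mul_of_nonneg_right (hpc i hi) (sub_nonneg.2 (hT i hi))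
  calc ∑ i ∈ S, p i * a i
      = ∑ i ∈ S \ T, p i * (a i - t) + ∑ i ∈ T, p i * (a i - t) + (∑ i ∈ S, p i) * t := by
        rw [Finset.sum_sdiff hTS, Finset.sum_mul, ← Finset.sum_add_distrib]
        exact Finset.sum_congr rfl fun i _ => by ring
    _ ≤ 0 + ∑ i ∈ T, c * (a i - t) + K * c * t := by gcongr
    _ = c * (∑ i ∈ T, a i + (K - T.card) * t) := by
        rw [← Finset.mul_sum, Finset.sum_sub_distrib, Finset.sum_const, nsmul_eq_mul]
        ring

lemma exists_mem_notMem_forall_le {α : Type*} [LinearOrder α] (a : N → α) {S T : Finset N}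
    (hcard : T.card < S.card) :
    ∃ x ∈ S, x ∉ T ∧ ∀ j ∈ S, j ∉ T → a j ≤ a x := by
  classical
  have hne : (S \ T).Nonempty := Finset.sdiff_nonempty_of_card_lt_card hcard
  simpa [and_assoc] using Finset.exists_max_image (S \ T) a hne

lemma exists_subset_card_eq_forall_notMem_le {α : Type*} [LinearOrder α] (a : N → α)
    {S : Finset N} {K : ℕ} (hK : K ≤ S.card) :
    ∃ T ⊆ S, T.card = K ∧ ∀ i ∈ T, ∀ j ∈ S, j ∉ T → a j ≤ a i := by
  classical
  induction K with
  | zero => exact ⟨∅, by simp⟩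
  | succ K ih =>
    obtain ⟨T, hTS, hTK, hT⟩ := ih (by omega)
    obtain ⟨x, hxS, hxT, hmax⟩ := exists_mem_notMem_forall_le a (S := S) (T := T) (by omega)
    refine ⟨insert x T, Finset.insert_subset hxS hTS, by simp [hxT, hTK], fun i hi j hj hjT => ?_⟩
    have hj_notMem : j ∉ T := fun h => hjT (Finset.mem_insert_of_mem h)
    rcases Finset.mem_insert.1 hi with rfl | hiT
    · exact hmax j hj hj_notMem
    · exact hT i hiT j hj hj_notMem

lemma exists_subset_card_le_sum_mul_le {S : Finset N} {p a : N → ℝ} {c : ℝ} {K : ℕ}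
    (ha : ∀ i ∈ S, 0 ≤ a i) (hp0 : ∀ i ∈ S, 0 ≤ p i) (hpc : ∀ i ∈ S, p i ≤ c)
    (hp : ∑ i ∈ S, p i ≤ K * c) :
    ∃ T ⊆ S, T.card ≤ K ∧ ∑ i ∈ S, p i * a i ≤ c * ∑ i ∈ T, a i := by
  rcases le_or_gt S.card K with hSK | hKS
  · refine ⟨S, subset_rfl, hSK, ?_⟩
    rw [Finset.mul_sum]
    exact Finset.sum_le_sum fun i hi => mul_le_mul_of_nonneg_right (hpc i hi) (ha i hi)
  · obtain ⟨T, hTS, hTK, hT⟩ := exists_subset_card_eq_forall_notMem_le a hKS.le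
    obtain ⟨x, hxS, hxT, hmax⟩ := exists_mem_notMem_forall_le a (hTK.trans_lt hKS)
    refine ⟨T, hTS, hTK.le, ?_⟩
    simpa [hTK] using sum_mul_le_of_threshold hTS (ha x hxS) (fun i hi => hT i hi x hxS hxT)
      hmax hp0 (fun i hi => hpc i (hTS hi)) hp

lemma exists_card_le_sum_mul_le_sqrt_mul_sqrt [Fintype N] [DecidableEq N] {σ a : N → ℝ}
    {H : Finset N} {k : ℕ} {s : ℝ} (ha : ∀ i, 0 ≤ a i) (hσ0 : ∀ i ∈ Hᶜ, 0 ≤ σ i)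
    (hσs : ∀ i ∈ Hᶜ, σ i ≤ s) (hHk : H.card ≤ k)
    (hsum : ∑ i ∈ Hᶜ, σ i ≤ ((k : ℝ) - H.card) * s) :
    ∃ T : Finset N, T.card ≤ k ∧
      ∑ i, σ i * a i ≤
        √(∑ i ∈ H, σ i ^ 2 + ((k : ℝ) - H.card) * s ^ 2) * √(∑ i ∈ T, a i ^ 2) := by
  rw [← Nat.cast_sub hHk] at hsum ⊢
  obtain ⟨T, hTH, hTk, hT⟩ :=
    exists_subset_card_le_sum_mul_le (fun i _ => ha i) hσ0 hσs hsum
  have hdisj : Disjoint H T := Finset.disjoint_left.2 fun i hi hiT => by simpa [hi] using hTH hiT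
  have sum_union_piecewise (f : N → ℝ → ℝ) :
      ∑ i ∈ H ∪ T, f i (H.piecewise σ (fun _ => s) i) = ∑ i ∈ H, f i (σ i) + ∑ i ∈ T, f i s := by
    rw [Finset.sum_union hdisj]
    congr 1 <;> refine Finset.sum_congr rfl fun i hi => ?_
    · rw [Finset.piecewise_eq_of_mem _ _ _ hi]
    · rw [Finset.piecewise_eq_of_notMem _ _ _ (Finset.disjoint_right.1 hdisj hi)]
  refine ⟨H ∪ T, by rw [Finset.card_union_of_disjoint hdisj]; omega, ?_⟩
  calc ∑ i, σ i * a i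
      ≤ ∑ i ∈ H, σ i * a i + ∑ i ∈ T, s * a i := by
        rw [← Finset.sum_add_sum_compl H, ← Finset.mul_sum]
        gcongr
    _ = ∑ i ∈ H ∪ T, H.piecewise σ (fun _ => s) i * a i :=
        (sum_union_piecewise fun i x => x * a i).symm
    _ ≤ √(∑ i ∈ H ∪ T, H.piecewise σ (fun _ => s) i ^ 2) * √(∑ i ∈ H ∪ T, a i ^ 2) :=
        Real.sum_mul_le_sqrt_mul_sqrt _ _ _
    _ ≤ √(∑ i ∈ H, σ i ^ 2 + ((k - H.card : ℕ) : ℝ) * s ^ 2) * √(∑ i ∈ H ∪ T, a i ^ 2) := by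
        rw [sum_union_piecewise fun _ x => x ^ 2, Finset.sum_const, nsmul_eq_mul]
        gcongr

lemma sum_mul_piecewise_self_const {R : Type*} [CommSemiring R] [Fintype N] [DecidableEq N]
    (H : Finset N) (σ : N → R) (s : R) :
    ∑ i, σ i * H.piecewise σ (fun _ => s) i = ∑ i ∈ H, σ i ^ 2 + (∑ i ∈ Hᶜ, σ i) * s := by
  rw [← Finset.sum_add_sum_compl H, Finset.sum_mul]
  congr 1 <;> refine Finset.sum_congr rfl fun i hi => ?_
  · rw [Finset.piecewise_eq_of_mem _ _ _ hi, sq]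
  · rw [Finset.piecewise_eq_of_notMem _ _ _ (Finset.mem_compl.1 hi)]

end WeightedSums

section Projection

variable {𝕜 E N : Type*} [RCLike 𝕜] [NormedAddCommGroup E] [InnerProductSpace 𝕜 E] [Fintype N]

lemma sum_norm_sq_starProjection_le_finrank {v : N → E} (hv : Orthonormal 𝕜 v)
    (K : Submodule 𝕜 E) [FiniteDimensional 𝕜 K] :
    ∑ i, ‖K.starProjection (v i)‖ ^ 2 ≤ Module.finrank 𝕜 K := by
  let b := stdOrthonormalBasis 𝕜 K
  have norm_sq_starProjection (x : E) :
      ‖K.starProjection x‖ ^ 2 = ∑ l, ‖inner 𝕜 x (b l : E)‖ ^ 2 := by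
    rw [Submodule.starProjection_apply, ← Submodule.coe_norm, ← b.sum_sq_norm_inner_left]
    simp
  calc ∑ i, ‖K.starProjection (v i)‖ ^ 2
      = ∑ l, ∑ i, ‖inner 𝕜 (v i) (b l : E)‖ ^ 2 := by
        simp only [norm_sq_starProjection]
        exact Finset.sum_comm
    _ ≤ ∑ l, ‖(b l : E)‖ ^ 2 := Finset.sum_le_sum fun l _ => hv.sum_inner_products_le _
    _ = Module.finrank 𝕜 K := by simp [← Submodule.coe_norm, b]

end Projection

section KetBra

variable {α N : Type*} {u : N → ι → ℂ} {w : N → κ → ℂ}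

lemma vinner_eq_inner (v w : ι → ℂ) : vinner v w = inner ℂ (toLp 2 v) (toLp 2 w) := by
  rw [EuclideanSpace.inner_toLp_toLp, vinner, dotProduct_comm]

lemma vinner_conjTranspose_mulVec (W : Matrix ι κ ℂ) (x : ι → ℂ) (y : κ → ℂ) :
    vinner y (Wᴴ *ᵥ x) = star (vinner x (W *ᵥ y)) := by
  rw [vinner, vinner, star_dotProduct, star_mulVec, conjTranspose_conjTranspose, dotProduct_mulVec]

lemma trace_mul_ketBra (A : Matrix κ ι ℂ) (x : ι → ℂ) (y : κ → ℂ) :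
    (A * ketBra x y).trace = vinner y (A *ᵥ x) := by
  rw [ketBra, mul_vecMulVec, trace_vecMulVec, dotProduct_comm, vinner]

lemma ketBra_mulVec (x : α → ℂ) (y z : κ → ℂ) : ketBra x y *ᵥ z = vinner y z • x := by
  rw [ketBra, vecMulVec_mulVec, vinner, op_smul_eq_smul]

lemma Orthonormal'.orthonormal_toLp [DecidableEq N] (hu : Orthonormal' u) :
    Orthonormal ℂ fun i => toLp 2 (u i) :=
  orthonormal_iff_ite.2 fun i j => (vinner_eq_inner _ _).symm.trans (hu i j)

lemma Orthonormal'.comp [DecidableEq N] {M : Type*} [DecidableEq M] (hu : Orthonormal' u)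
    {f : M → N} (hf : Function.Injective f) : Orthonormal' (u ∘ f) :=
  fun i j => by simp [hu (f i) (f j), hf.eq_iff]

variable [Fintype N]

lemma rank_sum_smul_ketBra_le (c : N → ℂ) (x : N → α → ℂ) (w : N → κ → ℂ) :
    (∑ i, c i • ketBra (x i) (w i)).rank ≤ Fintype.card N := by
  have factorization : ∑ i, c i • ketBra (x i) (w i) =
      (of fun l i => c i * x i l) * (of fun i l => star (w i l)) := by
    ext l l'
    simp [ketBra, vecMulVec_apply, Matrix.sum_apply, Matrix.mul_apply, mul_assoc]
  rw [factorization]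
  exact (rank_mul_le_left _ _).trans (rank_le_card_width _)

lemma trace_mul_sum_smul_ketBra (A : Matrix κ ι ℂ) (c : N → ℂ) (u : N → ι → ℂ) (w : N → κ → ℂ) :
    (A * ∑ i, c i • ketBra (u i) (w i)).trace = ∑ i, c i * vinner (w i) (A *ᵥ u i) := by
  simp only [Matrix.mul_sum, Matrix.mul_smul, trace_sum, trace_smul, trace_mul_ketBra, smul_eq_mul]

lemma vinner_sum_smul_ketBra_mulVec [DecidableEq N] (hu : Orthonormal' u) (hw : Orthonormal' w)
    (c : N → ℂ) (i : N) :
    vinner (u i) ((∑ j, c j • ketBra (u j) (w j)) *ᵥ w i) = c i := by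
  have mulVec_eq : (∑ j, c j • ketBra (u j) (w j)) *ᵥ w i = c i • u i := by
    simp [sum_mulVec, smul_mulVec, ketBra_mulVec, hw _ i]
  rw [mulVec_eq, vinner, dotProduct_smul, ← vinner, hu i i, if_pos rfl, smul_eq_mul, mul_one]

lemma trace_conjTranspose_sum_mul_sum_smul_ketBra [DecidableEq N] (hu : Orthonormal' u)
    (hw : Orthonormal' w) (c d : N → ℂ) :
    ((∑ i, c i • ketBra (u i) (w i))ᴴ * ∑ i, d i • ketBra (u i) (w i)).trace =
      ∑ i, d i * star (c i) := by
  simp only [trace_mul_sum_smul_ketBra, vinner_conjTranspose_mulVec,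
    vinner_sum_smul_ketBra_mulVec hu hw]

end KetBra

section Frobenius

variable {N : Type*} [Fintype N] [DecidableEq N] {u : N → ι → ℂ} {w : N → κ → ℂ}

lemma frobNorm_eq_sqrt_sum_norm_sq (Y : Matrix ι κ ℂ) :
    frobNorm Y = √(∑ i, ∑ j, ‖Y i j‖ ^ 2) := by
  simp only [frobNorm, Complex.normSq_eq_norm_sq]

lemma frobNorm_sq (Y : Matrix ι κ ℂ) : frobNorm Y ^ 2 = ∑ i, ∑ j, ‖Y i j‖ ^ 2 := by
  rw [frobNorm_eq_sqrt_sum_norm_sq, Real.sq_sqrt (by positivity)]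

lemma frobNorm_nonneg (Y : Matrix ι κ ℂ) : 0 ≤ frobNorm Y := Real.sqrt_nonneg _

lemma frobNorm_smul (c : ℂ) (Y : Matrix ι κ ℂ) : frobNorm (c • Y) = ‖c‖ * frobNorm Y := by
  simp only [frobNorm_eq_sqrt_sum_norm_sq, Matrix.smul_apply, norm_smul, mul_pow, ← Finset.mul_sum]
  rw [Real.sqrt_mul (sq_nonneg _), Real.sqrt_sq (norm_nonneg c)]

lemma norm_trace_mul_le_frobNorm_mul_frobNorm (X : Matrix ι κ ℂ) (Y : Matrix κ ι ℂ) :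
    ‖(X * Y).trace‖ ≤ frobNorm X * frobNorm Y := by
  rw [frobNorm_eq_sqrt_sum_norm_sq, frobNorm_eq_sqrt_sum_norm_sq,
    Finset.sum_comm (f := fun j i => ‖Y j i‖ ^ 2)]
  simp only [trace, diag_apply, Matrix.mul_apply, ← Fintype.sum_prod_type']
  refine (norm_sum_le _ _).trans ?_
  simp only [norm_mul]
  exact Real.sum_mul_le_sqrt_mul_sqrt _ _ _

lemma frobNorm_sum_smul_ketBra (hu : Orthonormal' u) (hw : Orthonormal' w) (c : N → ℂ) :
    frobNorm (∑ i, c i • ketBra (u i) (w i)) = √(∑ i, ‖c i‖ ^ 2) := by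
  have trace_self (Y : Matrix ι κ ℂ) :
      (Yᴴ * Y).trace = ((∑ i, ∑ j, Complex.normSq (Y i j) : ℝ) : ℂ) := by
    rw [Finset.sum_comm]
    simp [trace, Matrix.mul_apply, Complex.normSq_eq_conj_mul_self]
  have h := trace_conjTranspose_sum_mul_sum_smul_ketBra hu hw c c
  simp only [trace_self, Complex.star_def, Complex.mul_conj', ← Complex.ofReal_pow,
    ← Complex.ofReal_sum] at h
  rw [frobNorm, Complex.ofReal_injective h]

lemma sum_norm_sq_mulVec_le_frobNorm_sq (hu : Orthonormal' u) (Y : Matrix κ ι ℂ) :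
    ∑ i, ‖toLp 2 (Y *ᵥ u i)‖ ^ 2 ≤ frobNorm Y ^ 2 := by
  have mulVec_eq_inner (i : N) (l : κ) :
      (Y *ᵥ u i) l = inner ℂ (toLp 2 (star (Y l))) (toLp 2 (u i)) := by
    rw [← vinner_eq_inner, vinner, star_star, mulVec]
  rw [frobNorm_sq]
  calc ∑ i, ‖toLp 2 (Y *ᵥ u i)‖ ^ 2
      = ∑ l, ∑ i, ‖inner ℂ (toLp 2 (u i)) (toLp 2 (star (Y l)))‖ ^ 2 := by
        rw [Finset.sum_comm]
        simp only [EuclideanSpace.norm_sq_eq, mulVec_eq_inner, norm_inner_symm]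
    _ ≤ ∑ l, ‖toLp 2 (star (Y l))‖ ^ 2 :=
        Finset.sum_le_sum fun l _ => hu.orthonormal_toLp.sum_inner_products_le _
    _ = ∑ l, ∑ j, ‖Y l j‖ ^ 2 := by simp [EuclideanSpace.norm_sq_eq]

end Frobenius

section KNorm

variable {N : Type*} [Fintype N] [DecidableEq N] {u : N → ι → ℂ} {w : N → κ → ℂ}

lemma norm_trace_mul_le_kNorm {k : ℕ} (X : Matrix ι κ ℂ) {Y : Matrix κ ι ℂ} (hrank : Y.rank ≤ k)
    (hY : frobNorm Y ≤ 1) : ‖(X * Y).trace‖ ≤ kNorm k X := by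
  refine le_csSup ⟨frobNorm X, ?_⟩ ⟨Y, hrank, hY, rfl⟩
  rintro _ ⟨Z, -, hZ, rfl⟩
  exact (norm_trace_mul_le_frobNorm_mul_frobNorm X Z).trans
    (mul_le_of_le_one_right (frobNorm_nonneg X) hZ)

lemma norm_trace_mul_le_kNorm_mul_frobNorm {k : ℕ} (X : Matrix ι κ ℂ) {Y : Matrix κ ι ℂ}
    (hrank : Y.rank ≤ k) : ‖(X * Y).trace‖ ≤ kNorm k X * frobNorm Y := by
  rcases (frobNorm_nonneg Y).eq_or_lt with hY | hY
  · simpa [← hY] using norm_trace_mul_le_frobNorm_mul_frobNorm X Y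
  have norm_inv_frobNorm : ‖((frobNorm Y : ℂ))⁻¹‖ = (frobNorm Y)⁻¹ := by
    rw [norm_inv, Complex.norm_of_nonneg hY.le]
  have h := norm_trace_mul_le_kNorm X (k := k) (Y := ((frobNorm Y : ℂ))⁻¹ • Y)
    (by
      rwa [rank_smul_of_mem_nonZeroDivisors]
      simpa using hY.ne')
    (by rw [frobNorm_smul, norm_inv_frobNorm, inv_mul_cancel₀ hY.ne'])
  rwa [Matrix.mul_smul, trace_smul, norm_smul, norm_inv_frobNorm, inv_mul_le_iff₀ hY,
    mul_comm] at h

lemma kNorm_smul (k : ℕ) (c : ℂ) (X : Matrix ι κ ℂ) : kNorm k (c • X) = ‖c‖ * kNorm k X := by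
  rw [kNorm, kNorm, ← smul_eq_mul, ← Real.sSup_smul_of_nonneg (norm_nonneg c)]
  congr 1
  ext x
  simp only [Matrix.smul_mul, trace_smul, norm_smul, Set.mem_smul_set]
  constructor
  · rintro ⟨Y, hrank, hY, rfl⟩
    exact ⟨_, ⟨Y, hrank, hY, rfl⟩, rfl⟩
  · rintro ⟨_, ⟨Y, hrank, hY, rfl⟩, rfl⟩
    exact ⟨Y, hrank, hY, rfl⟩

lemma sqrt_sum_norm_vinner_sq_le_kNorm {k : ℕ} (W : Matrix ι κ ℂ) (hk : Fintype.card N ≤ k)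
    (hu : Orthonormal' u) (hw : Orthonormal' w) :
    √(∑ i, ‖vinner (u i) (W *ᵥ w i)‖ ^ 2) ≤ kNorm k W := by
  set z : N → ℂ := fun i => vinner (u i) (W *ᵥ w i)
  set A := ∑ i, ‖z i‖ ^ 2
  have hA : 0 ≤ A := by positivity
  have trace_eq : (W * ∑ i, star (z i) • ketBra (w i) (u i)).trace = (A : ℂ) := by
    rw [trace_mul_sum_smul_ketBra]
    simp only [A, z, Complex.star_def, Complex.conj_mul', Complex.ofReal_sum, Complex.ofReal_pow]
  have h := norm_trace_mul_le_kNorm_mul_frobNorm W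
    ((rank_sum_smul_ketBra_le (fun i => star (z i)) w u).trans hk)
  simp only [trace_eq, Complex.norm_of_nonneg hA, frobNorm_sum_smul_ketBra hw hu, norm_star] at h
  rcases (Real.sqrt_nonneg A).eq_or_lt with hA0 | hA0
  · rw [← hA0]
    exact Real.sSup_nonneg (by rintro _ ⟨Y, -, -, rfl⟩; positivity)
  · exact le_of_mul_le_mul_right (by rwa [Real.mul_self_sqrt hA]) hA0

lemma sqrt_sum_finset_norm_vinner_sq_le_kNorm {M : Type*} [DecidableEq M] {u : M → ι → ℂ}
    {w : M → κ → ℂ} {k : ℕ} (W : Matrix ι κ ℂ) {T : Finset M} (hT : T.card ≤ k)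
    (hu : Orthonormal' u) (hw : Orthonormal' w) :
    √(∑ i ∈ T, ‖vinner (u i) (W *ᵥ w i)‖ ^ 2) ≤ kNorm k W := by
  rw [← Finset.sum_coe_sort]
  exact sqrt_sum_norm_vinner_sq_le_kNorm W (by simpa using hT)
    (hu.comp Subtype.val_injective) (hw.comp Subtype.val_injective)

lemma norm_vinner_mulVec_le [DecidableEq ι] (Y : Matrix κ ι ℂ) (x : ι → ℂ) (y : κ → ℂ) :
    ‖vinner y (Y *ᵥ x)‖ ≤
      ‖(LinearMap.range (toEuclideanLin Y)).starProjection (toLp 2 y)‖ * ‖toLp 2 (Y *ᵥ x)‖ := by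
  have hmem : toLp 2 (Y *ᵥ x) ∈ LinearMap.range (toEuclideanLin Y) := ⟨toLp 2 x, rfl⟩
  rw [vinner_eq_inner, ← Submodule.starProjection_eq_self_iff.2 hmem,
    ← Submodule.inner_starProjection_left_eq_right, Submodule.starProjection_eq_self_iff.2 hmem]
  exact norm_inner_le_norm _ _

lemma norm_trace_sum_smul_ketBra_mul_le [DecidableEq ι] (hu : Orthonormal' u) (w : N → κ → ℂ)
    (c : N → ℂ) (Y : Matrix κ ι ℂ) :
    ‖((∑ i, c i • ketBra (u i) (w i)) * Y).trace‖ ≤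
      √(∑ i, ‖(LinearMap.range (toEuclideanLin Y)).starProjection (toLp 2 (w i))‖ ^ 2 *
        ‖c i‖ ^ 2) * frobNorm Y := by
  let K := LinearMap.range (toEuclideanLin Y)
  calc ‖((∑ i, c i • ketBra (u i) (w i)) * Y).trace‖
      ≤ ∑ i, (‖K.starProjection (toLp 2 (w i))‖ * ‖c i‖) * ‖toLp 2 (Y *ᵥ u i)‖ := by
        rw [trace_mul_comm, trace_mul_sum_smul_ketBra]
        refine norm_sum_le_of_le _ fun i _ => ?_
        rw [norm_mul, mul_comm _ ‖c i‖, mul_assoc]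
        exact mul_le_mul_of_nonneg_left (norm_vinner_mulVec_le Y _ _) (norm_nonneg _)
    _ ≤ √(∑ i, ‖K.starProjection (toLp 2 (w i))‖ ^ 2 * ‖c i‖ ^ 2) *
          √(∑ i, ‖toLp 2 (Y *ᵥ u i)‖ ^ 2) := by
        simpa only [mul_pow] using Real.sum_mul_le_sqrt_mul_sqrt Finset.univ
          (fun i => ‖K.starProjection (toLp 2 (w i))‖ * ‖c i‖) fun i => ‖toLp 2 (Y *ᵥ u i)‖
    _ ≤ √(∑ i, ‖K.starProjection (toLp 2 (w i))‖ ^ 2 * ‖c i‖ ^ 2) * frobNorm Y := by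
        gcongr
        exact Real.sqrt_le_iff.2 ⟨frobNorm_nonneg Y, sum_norm_sq_mulVec_le_frobNorm_sq hu Y⟩

lemma kNorm_sum_smul_ketBra_le (hu : Orthonormal' u) (hw : Orthonormal' w) (k : ℕ) {c : N → ℂ}
    {H : Finset N} {t : ℝ} (ht : 0 ≤ t) (hH : ∀ i ∈ H, t ≤ ‖c i‖) (hHc : ∀ i ∉ H, ‖c i‖ ≤ t) :
    kNorm k (∑ i, c i • ketBra (u i) (w i)) ≤
      √(∑ i ∈ H, ‖c i‖ ^ 2 + ((k : ℝ) - H.card) * t ^ 2) := by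
  classical
  refine Real.sSup_le ?_ (Real.sqrt_nonneg _)
  rintro _ ⟨Y, hrank, hY, rfl⟩
  let p (i : N) : ℝ := ‖(LinearMap.range (toEuclideanLin Y)).starProjection (toLp 2 (w i))‖ ^ 2
  have p_le_one (i : N) : p i ≤ 1 := by
    refine pow_le_one₀ (norm_nonneg _) ((Submodule.norm_starProjection_apply_le _ _).trans_eq ?_)
    exact hw.orthonormal_toLp.1 i
  have sum_p_le : ∑ i, p i ≤ (k : ℝ) * 1 := by
    rw [mul_one]
    refine (sum_norm_sq_starProjection_le_finrank hw.orthonormal_toLp _).trans ?_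
    rw [rank_eq_finrank_range_toLin Y (PiLp.basisFun 2 ℂ κ) (PiLp.basisFun 2 ℂ ι)] at hrank
    exact_mod_cast hrank
  have weighted_sum_le :
      ∑ i, p i * ‖c i‖ ^ 2 ≤ ∑ i ∈ H, ‖c i‖ ^ 2 + ((k : ℝ) - H.card) * t ^ 2 := by
    simpa using sum_mul_le_of_threshold H.subset_univ (sq_nonneg t)
      (fun i hi => pow_le_pow_left₀ ht (hH i hi) 2)
      (fun i _ hi => pow_le_pow_left₀ (norm_nonneg _) (hHc i hi) 2)
      (fun i _ => sq_nonneg _) (fun i _ => p_le_one i) sum_p_le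
  calc ‖((∑ i, c i • ketBra (u i) (w i)) * Y).trace‖
      ≤ √(∑ i, p i * ‖c i‖ ^ 2) * frobNorm Y := norm_trace_sum_smul_ketBra_mul_le hu w c Y
    _ ≤ √(∑ i, p i * ‖c i‖ ^ 2) := mul_le_of_le_one_right (Real.sqrt_nonneg _) hY
    _ ≤ √(∑ i ∈ H, ‖c i‖ ^ 2 + ((k : ℝ) - H.card) * t ^ 2) := Real.sqrt_le_sqrt weighted_sum_le

end KNorm

section DualNorm

variable {N : Type*} [Fintype N] [DecidableEq N] {u : N → ι → ℂ} {w : N → κ → ℂ}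
  {σ : N → ℝ} {H : Finset N} {k : ℕ} {s : ℝ}

lemma norm_trace_conjTranspose_mul_sum_smul_ketBra_le (hu : Orthonormal' u) (hw : Orthonormal' w)
    (hσ0 : ∀ i, 0 ≤ σ i) (hHk : H.card ≤ k) (hHc : ∀ i ∉ H, σ i ≤ s)
    (hsum : ∑ i ∈ Hᶜ, σ i = ((k : ℝ) - H.card) * s) (W : Matrix ι κ ℂ) :
    ‖(Wᴴ * ∑ i, (σ i : ℂ) • ketBra (u i) (w i)).trace‖ ≤
      √(∑ i ∈ H, σ i ^ 2 + ((k : ℝ) - H.card) * s ^ 2) * kNorm k W := by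
  obtain ⟨T, hTk, hT⟩ := exists_card_le_sum_mul_le_sqrt_mul_sqrt
    (a := fun i => ‖vinner (u i) (W *ᵥ w i)‖) (fun i => norm_nonneg _) (fun i _ => hσ0 i)
    (fun i hi => hHc i (Finset.mem_compl.1 hi)) hHk hsum.le
  calc ‖(Wᴴ * ∑ i, (σ i : ℂ) • ketBra (u i) (w i)).trace‖
      ≤ ∑ i, σ i * ‖vinner (u i) (W *ᵥ w i)‖ := by
        rw [trace_mul_sum_smul_ketBra]
        refine norm_sum_le_of_le _ fun i _ => ?_
        rw [norm_mul, Complex.norm_of_nonneg (hσ0 i), vinner_conjTranspose_mulVec, norm_star]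
    _ ≤ _ := hT
    _ ≤ _ := by
        gcongr
        exact sqrt_sum_finset_norm_vinner_sq_le_kNorm W hTk hu hw

lemma kNorm_sum_piecewise_smul_ketBra_le (hu : Orthonormal' u) (hw : Orthonormal' w) (k : ℕ)
    (hs : 0 ≤ s) (hH : ∀ i ∈ H, s ≤ σ i) :
    kNorm k (∑ i, (H.piecewise σ (fun _ => s) i : ℂ) • ketBra (u i) (w i)) ≤
      √(∑ i ∈ H, σ i ^ 2 + ((k : ℝ) - H.card) * s ^ 2) := by
  have norm_of_mem {i : N} (hi : i ∈ H) :
      ‖((H.piecewise σ (fun _ => s) i : ℝ) : ℂ)‖ = σ i := by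
    rw [Finset.piecewise_eq_of_mem _ _ _ hi, Complex.norm_of_nonneg (hs.trans (hH i hi))]
  have norm_of_notMem {i : N} (hi : i ∉ H) :
      ‖((H.piecewise σ (fun _ => s) i : ℝ) : ℂ)‖ = s := by
    rw [Finset.piecewise_eq_of_notMem _ _ _ hi, Complex.norm_of_nonneg hs]
  have h := kNorm_sum_smul_ketBra_le hu hw k hs
    (fun i hi => (hH i hi).trans_eq (norm_of_mem hi).symm) fun i hi => (norm_of_notMem hi).le
  rwa [Finset.sum_congr rfl fun i hi => congrArg (· ^ 2) (norm_of_mem hi)] at h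

lemma exists_kNorm_le_one_trace_eq_sqrt (hu : Orthonormal' u) (hw : Orthonormal' w)
    (hs : 0 ≤ s) (hH : ∀ i ∈ H, s ≤ σ i)
    (hsum : ∑ i ∈ Hᶜ, σ i = ((k : ℝ) - H.card) * s) :
    ∃ W : Matrix ι κ ℂ, kNorm k W ≤ 1 ∧
      (Wᴴ * ∑ i, (σ i : ℂ) • ketBra (u i) (w i)).trace =
        (√(∑ i ∈ H, σ i ^ 2 + ((k : ℝ) - H.card) * s ^ 2) : ℂ) := by
  set D := ∑ i ∈ H, σ i ^ 2 + ((k : ℝ) - H.card) * s ^ 2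
  let τ : N → ℝ := H.piecewise σ fun _ => s
  have sum_mul_τ : ∑ i, σ i * τ i = D := by
    rw [sum_mul_piecewise_self_const, hsum, mul_assoc, ← sq]
  refine ⟨((√D)⁻¹ : ℂ) • ∑ i, (τ i : ℂ) • ketBra (u i) (w i), ?_, ?_⟩
  · calc kNorm k (((√D)⁻¹ : ℂ) • ∑ i, (τ i : ℂ) • ketBra (u i) (w i))
        = (√D)⁻¹ * kNorm k (∑ i, (τ i : ℂ) • ketBra (u i) (w i)) := by
          rw [kNorm_smul, norm_inv, Complex.norm_of_nonneg (Real.sqrt_nonneg _)]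
      _ ≤ (√D)⁻¹ * √D := by
          gcongr
          exact kNorm_sum_piecewise_smul_ketBra_le hu hw k hs hH
      _ ≤ 1 := inv_mul_le_one
  · rw [conjTranspose_smul, Matrix.smul_mul, trace_smul,
      trace_conjTranspose_sum_mul_sum_smul_ketBra hu hw]
    simp only [Complex.star_def, Complex.conj_ofReal, ← Complex.ofReal_mul,
      ← Complex.ofReal_sum, ← Complex.ofReal_inv, smul_eq_mul, sum_mul_τ]
    rw [inv_mul_eq_div, Real.div_sqrt]

theorem dualNormM_kNorm_sum_smul_ketBra (hu : Orthonormal' u) (hw : Orthonormal' w)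
    (hσ0 : ∀ i, 0 ≤ σ i) (hHk : H.card ≤ k) (hs : 0 ≤ s) (hH : ∀ i ∈ H, s ≤ σ i)
    (hHc : ∀ i ∉ H, σ i ≤ s) (hsum : ∑ i ∈ Hᶜ, σ i = ((k : ℝ) - H.card) * s) :
    dualNormM (kNorm k) (∑ i, σ i • ketBra (u i) (w i)) =
      √(∑ i ∈ H, σ i ^ 2 + ((k : ℝ) - H.card) * s ^ 2) := by
  simp only [← Complex.coe_smul]
  refine IsGreatest.csSup_eq ⟨?_, ?_⟩
  · obtain ⟨W, hW, htrace⟩ := exists_kNorm_le_one_trace_eq_sqrt hu hw hs hH hsum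
    exact ⟨W, hW, by rw [htrace, Complex.norm_of_nonneg (Real.sqrt_nonneg _)]⟩
  · rintro _ ⟨W, hW, rfl⟩
    exact (norm_trace_conjTranspose_mul_sum_smul_ketBra_le hu hw hσ0 hHk hHc hsum W).trans
      (mul_le_of_le_one_right (Real.sqrt_nonneg _) hW)

end DualNorm

section LeadingIndices

variable {q r : ℕ}

lemma sum_fin_filter_val_lt {M : Type*} [AddCommMonoid M] (hrq : r ≤ q) (f : ℕ → M) :
    ∑ i : Fin q with i.val < r, f i = ∑ i ∈ range r, f i := by
  rw [Finset.sum_filter, Fin.sum_univ_eq_sum_range (fun i => if i < r then f i else 0),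
    ← Finset.sum_filter]
  congr 1
  ext i
  simp only [Finset.mem_filter, Finset.mem_range]
  omega

lemma sum_fin_filter_val_lt_compl {M : Type*} [AddCommGroup M] (hrq : r ≤ q) (f : ℕ → M) :
    ∑ i ∈ ({i : Fin q | i.val < r} : Finset (Fin q))ᶜ, f i = ∑ i ∈ Ico r q, f i := by
  rw [Finset.sum_Ico_eq_sub _ hrq, ← sum_fin_filter_val_lt hrq, ← Fin.sum_univ_eq_sum_range,
    eq_sub_iff_add_eq, Finset.sum_compl_add_sum]

lemma le_sum_Ico_div_of_le_sum_Ico_succ_div {σ : ℕ → ℝ} {k : ℕ} (hrq : r < q) (hrk : r < k)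
    (hσ0 : ∀ i < q, 0 ≤ σ i)
    (hr : r + 1 < k → σ r ≤ (∑ i ∈ Ico (r + 1) q, σ i) / ((k : ℝ) - (r + 1 : ℕ))) :
    σ r ≤ (∑ i ∈ Ico r q, σ i) / ((k : ℝ) - r) := by
  have hkr : 0 < (k : ℝ) - r := sub_pos.2 (by exact_mod_cast hrk)
  rw [le_div_iff₀ hkr, Finset.sum_eq_sum_Ico_succ_bot hrq]
  rcases (Nat.succ_le_of_lt hrk).eq_or_lt with hk | hk
  · have tail_nonneg : 0 ≤ ∑ i ∈ Ico (r + 1) q, σ i :=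
      Finset.sum_nonneg fun i hi => hσ0 i (Finset.mem_Ico.1 hi).2
    have hk' : (k : ℝ) - r = 1 := by rw [← hk]; push_cast; ring
    rw [hk', mul_one]
    linarith
  · have hk' : 0 < (k : ℝ) - (r + 1 : ℕ) := sub_pos.2 (by exact_mod_cast hk)
    have h := (le_div_iff₀ hk').1 (hr hk)
    push_cast at h
    linarith

end LeadingIndices

theorem dual_k2_norm_eq_general (X : Matrix ι κ ℂ) (k q : ℕ)
    (σ : ℕ → ℝ) (u : ℕ → ι → ℂ) (w : ℕ → κ → ℂ)
    (hσ0 : ∀ i, i < q → 0 ≤ σ i)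
    (hσmono : ∀ i j, i ≤ j → j < q → σ j ≤ σ i)
    (hu : ∀ i j, i < q → j < q → vinner (u i) (u j) = if i = j then 1 else 0)
    (hw : ∀ i j, i < q → j < q → vinner (w i) (w j) = if i = j then 1 else 0)
    (hX : X = ∑ i ∈ range q, σ i • ketBra (u i) (w i))
    (r : ℕ) (hrk : r < k) (hrq : r ≤ q)
    (hr : 1 ≤ r → (∑ i ∈ Ico r q, σ i) / ((k : ℝ) - r) < σ (r - 1))
    (hrmax : ∀ j, r < j → j < k → j ≤ q →
      ¬ ((∑ i ∈ Ico j q, σ i) / ((k : ℝ) - j) < σ (j - 1))) :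
    dualNormM (kNorm k) X =
      √((∑ i ∈ range r, σ i ^ 2) +
        ((k : ℝ) - r) * ((∑ i ∈ Ico r q, σ i) / ((k : ℝ) - r)) ^ 2) := by
  have hkr : 0 < (k : ℝ) - r := sub_pos.2 (by exact_mod_cast hrk)
  let H : Finset (Fin q) := {i | i.val < r}
  have card_H : H.card = r := by simp [H, Fin.card_filter_val_lt, hrq]
  have hu' : Orthonormal' fun i : Fin q => u i := fun i j => by
    simpa only [Fin.ext_iff] using hu i j i.2 j.2
  have hw' : Orthonormal' fun i : Fin q => w i := fun i j => by
    simpa only [Fin.ext_iff] using hw i j i.2 j.2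
  rw [hX, Finset.sum_range, ← sum_fin_filter_val_lt hrq fun i => σ i ^ 2]
  have h := dualNormM_kNorm_sum_smul_ketBra (H := H) (k := k) (σ := fun i : Fin q => σ i)
    (s := (∑ i ∈ Ico r q, σ i) / ((k : ℝ) - r)) hu' hw' (fun i => hσ0 i i.2)
  rw [card_H] at h
  refine h hrk.le ?_ (fun i hi => ?_) (fun i hi => ?_) ?_
  · exact div_nonneg (Finset.sum_nonneg fun i hi => hσ0 i (Finset.mem_Ico.1 hi).2) hkr.le
  · have hir : i.val < r := by simpa [H] using hi
    exact (hr (by omega)).le.trans (hσmono i (r - 1) (by omega) (by omega))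
  · have hri : r ≤ i := by simpa [H] using hi
    exact (hσmono r i hri i.2).trans <|
      le_sum_Ico_div_of_le_sum_Ico_succ_div (hri.trans_lt i.2) hrk hσ0 fun h =>
        not_lt.1 (hrmax (r + 1) r.lt_succ_self h (hri.trans_lt i.2))
  · rw [sum_fin_filter_val_lt_compl hrq, mul_div_cancel₀ _ hkr.ne']

/-- the value of the dual of the (k,2)-norm on a matrix `X ∈ M_{n,m}(ℂ)` with
singular values `σ 0 ≥ σ 1 ≥ ⋯ ≥ σ (min m n - 1) ≥ 0` (presented via a singular value
decomposition of `X`; here the 0-based `σ i` is the paper's `σ_{i+1}`). `r` is the largest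
index with `1 ≤ r < k` such that `σ_r > (Σ_{i=r+1}^{min(m,n)} σ_i)/(k-r)` (and `r = 0` if no
such index exists or `k = 1`). -/
theorem dual_k2_norm_eq {n m : ℕ} (X : Matrix (Fin n) (Fin m) ℂ) (k : ℕ)
    (hk1 : 1 ≤ k) (hk : k ≤ min m n)
    (σ : ℕ → ℝ) (u : ℕ → Fin n → ℂ) (w : ℕ → Fin m → ℂ)
    (hσ0 : ∀ i, i < min m n → 0 ≤ σ i)
    (hσmono : ∀ i j, i ≤ j → j < min m n → σ j ≤ σ i)
    (hu : ∀ i j, i < min m n → j < min m n → vinner (u i) (u j) = if i = j then 1 else 0)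
    (hw : ∀ i j, i < min m n → j < min m n → vinner (w i) (w j) = if i = j then 1 else 0)
    (hX : X = ∑ i ∈ Finset.range (min m n), σ i • ketBra (u i) (w i))
    (r : ℕ) (hrk : r < k)
    (hr : 1 ≤ r → (∑ i ∈ Finset.Ico r (min m n), σ i) / ((k : ℝ) - r) < σ (r - 1))
    (hrmax : ∀ j, r < j → j < k →
      ¬ ((∑ i ∈ Finset.Ico j (min m n), σ i) / ((k : ℝ) - j) < σ (j - 1))) :
    dualNormM (kNorm k) X =
      Real.sqrt ((∑ i ∈ Finset.range r, σ i ^ 2) +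
        ((k : ℝ) - r) * ((∑ i ∈ Finset.Ico r (min m n), σ i) / ((k : ℝ) - r)) ^ 2) :=
  dual_k2_norm_eq_general X k (min m n) σ u w hσ0 hσmono hu hw hX r hrk (hrk.le.trans hk) hr
    fun j hrj hjk _ => hrmax j hrj hjk

end Ent
end

section
/- Let Y ∈ M_m ⊗ M_n be Hermitian, written as Y = cI − X with c ∈ ℝ and X positive semidefinite, and fix 1 ≤ k ≤ min(m,n). Then the following are equivalent: (a) Y is k-block positive; (b) c ≥ ‖X‖_{S(k)}; (c) c ≥ r_k^⊗(X). -/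
open scoped Kronecker ComplexOrder
open Matrix

namespace Ent

variable {ι κ : Type*} [Fintype ι] [Fintype κ]

/-!
On unit vectors `⟨v|cI - X|v⟩ = c - ⟨v|X|v⟩`, so `k`-block positivity of `cI - X` says that `c`
bounds the nonnegative numbers `⟨v|X|v⟩`, that is, `prodRad k X ≤ c`. For positive semidefinite `X`
the Cauchy–Schwarz inequality `|⟨v|X|w⟩|² ≤ ⟨v|X|v⟩ ⟨w|X|w⟩` shows that the off-diagonal values
do not enlarge the supremum, so `SkNorm k X = prodRad k X`.
-/

lemma vinner_eq_inner_toLp (v w : ι → ℂ) :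
    vinner v w = inner ℂ (WithLp.toLp 2 v) (WithLp.toLp 2 w) := by
  rw [EuclideanSpace.inner_toLp_toLp, dotProduct_comm, vinner]

lemma norm_toLp_eq_one_of_vinner_self_eq_one {v : ι → ℂ} (hv : vinner v v = 1) :
    ‖WithLp.toLp 2 v‖ = 1 := by
  rw [vinner_eq_inner_toLp, inner_self_eq_norm_sq_to_K] at hv
  have norm_sq : ‖WithLp.toLp 2 v‖ ^ 2 = 1 := Complex.ofReal_injective (by simpa using hv)
  exact (pow_eq_one_iff_of_nonneg (norm_nonneg _) two_ne_zero).mp norm_sq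

open scoped Matrix.Norms.L2Operator in
lemma norm_vinner_mulVec_le_l2_opNorm [DecidableEq κ] (X : Matrix ι κ ℂ) {v : ι → ℂ} {w : κ → ℂ}
    (hv : vinner v v = 1) (hw : vinner w w = 1) : ‖vinner v (X *ᵥ w)‖ ≤ ‖X‖ := by
  calc ‖vinner v (X *ᵥ w)‖
      ≤ ‖WithLp.toLp 2 v‖ * ‖WithLp.toLp 2 (X *ᵥ w)‖ := by
        rw [vinner_eq_inner_toLp]
        exact norm_inner_le_norm _ _
    _ ≤ ‖WithLp.toLp 2 v‖ * (‖X‖ * ‖WithLp.toLp 2 w‖) := by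
        gcongr
        exact l2_opNorm_mulVec X (WithLp.toLp 2 w)
    _ = ‖X‖ := by
        rw [norm_toLp_eq_one_of_vinner_self_eq_one hv, norm_toLp_eq_one_of_vinner_self_eq_one hw,
          one_mul, mul_one]

lemma norm_vinner_mulVec_self_eq_re {X : Matrix ι ι ℂ} (hX : X.PosSemidef) (v : ι → ℂ) :
    ‖vinner v (X *ᵥ v)‖ = (vinner v (X *ᵥ v)).re :=
  (Complex.re_eq_norm.mpr (hX.dotProduct_mulVec_nonneg v)).symm

lemma norm_vinner_mulVec_sq_le {X : Matrix ι ι ℂ} (hX : X.PosSemidef) (v w : ι → ℂ) :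
    ‖vinner v (X *ᵥ w)‖ ^ 2 ≤ (vinner v (X *ᵥ v)).re * (vinner w (X *ᵥ w)).re := by
  let := X.toSeminormedAddCommGroup hX
  let := X.toInnerProductSpace hX
  have inner_eq_vinner (x y : ι → ℂ) : inner ℂ x y = vinner x (X *ᵥ y) := dotProduct_comm _ _
  have cauchy_schwarz := inner_mul_inner_self_le (𝕜 := ℂ) v w
  rw [norm_inner_symm w v, ← sq] at cauchy_schwarz
  simpa only [inner_eq_vinner, RCLike.re_eq_complex_re] using cauchy_schwarz

open scoped Matrix.Norms.L2Operator in
lemma norm_vinner_mulVec_le_SkNorm {k : ℕ} (X : Matrix (ι × κ) (ι × κ) ℂ) {v w : ι × κ → ℂ}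
    (hv : vinner v v = 1) (hw : vinner w w = 1)
    (hkv : SchmidtRankLE k v) (hkw : SchmidtRankLE k w) :
    ‖vinner v (X *ᵥ w)‖ ≤ SkNorm k X := by
  classical
  refine le_csSup ⟨‖X‖, ?_⟩ ⟨v, w, hv, hw, hkv, hkw, rfl⟩
  rintro _ ⟨v', w', hv', hw', -, -, rfl⟩
  exact norm_vinner_mulVec_le_l2_opNorm X hv' hw'

open scoped Matrix.Norms.L2Operator in
lemma norm_vinner_mulVec_self_le_prodRad {k : ℕ} (X : Matrix (ι × κ) (ι × κ) ℂ) {v : ι × κ → ℂ}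
    (hv : vinner v v = 1) (hkv : SchmidtRankLE k v) :
    ‖vinner v (X *ᵥ v)‖ ≤ prodRad k X := by
  classical
  refine le_csSup ⟨‖X‖, ?_⟩ ⟨v, hv, hkv, rfl⟩
  rintro _ ⟨v', hv', -, rfl⟩
  exact norm_vinner_mulVec_le_l2_opNorm X hv' hv'

lemma prodRad_nonneg (k : ℕ) (X : Matrix (ι × κ) (ι × κ) ℂ) : 0 ≤ prodRad k X := by
  apply Real.sSup_nonneg
  rintro _ ⟨v, -, -, rfl⟩
  exact norm_nonneg _

lemma SkNorm_nonneg (k : ℕ) (X : Matrix (ι × κ) (ι × κ) ℂ) : 0 ≤ SkNorm k X := by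
  apply Real.sSup_nonneg
  rintro _ ⟨v, w, -, -, -, -, rfl⟩
  exact norm_nonneg _

lemma prodRad_le_SkNorm (k : ℕ) (X : Matrix (ι × κ) (ι × κ) ℂ) : prodRad k X ≤ SkNorm k X := by
  refine Real.sSup_le ?_ (SkNorm_nonneg k X)
  rintro _ ⟨v, hv, hkv, rfl⟩
  exact norm_vinner_mulVec_le_SkNorm X hv hv hkv hkv

lemma SkNorm_le_prodRad (k : ℕ) {X : Matrix (ι × κ) (ι × κ) ℂ} (hX : X.PosSemidef) :
    SkNorm k X ≤ prodRad k X := by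
  have re_le_prodRad {v : ι × κ → ℂ} (hv : vinner v v = 1) (hkv : SchmidtRankLE k v) :
      (vinner v (X *ᵥ v)).re ≤ prodRad k X :=
    (Complex.re_le_norm _).trans (norm_vinner_mulVec_self_le_prodRad X hv hkv)
  refine Real.sSup_le ?_ (prodRad_nonneg k X)
  rintro _ ⟨v, w, hv, hw, hkv, hkw, rfl⟩
  refine le_of_sq_le_sq ?_ (prodRad_nonneg k X)
  calc ‖vinner v (X *ᵥ w)‖ ^ 2
      ≤ (vinner v (X *ᵥ v)).re * (vinner w (X *ᵥ w)).re := norm_vinner_mulVec_sq_le hX v w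
    _ ≤ prodRad k X * prodRad k X :=
        mul_le_mul (re_le_prodRad hv hkv) (re_le_prodRad hw hkw)
          (hX.re_dotProduct_nonneg w) (prodRad_nonneg k X)
    _ = prodRad k X ^ 2 := (sq _).symm

lemma SkNorm_eq_prodRad (k : ℕ) {X : Matrix (ι × κ) (ι × κ) ℂ} (hX : X.PosSemidef) :
    SkNorm k X = prodRad k X :=
  (SkNorm_le_prodRad k hX).antisymm (prodRad_le_SkNorm k X)

lemma vinner_prodVec (a a' : ι → ℂ) (b b' : κ → ℂ) :
    vinner (prodVec a b) (prodVec a' b') = vinner a a' * vinner b b' := by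
  simp only [vinner, dotProduct, prodVec, Pi.star_apply, star_mul', Fintype.sum_prod_type,
    Finset.sum_mul_sum, mul_mul_mul_comm]

lemma schmidtRankLE_prodVec {α β : Type*} {k : ℕ} (hk : 1 ≤ k) (a : α → ℂ) (b : β → ℂ) :
    SchmidtRankLE k (prodVec a b) := by
  refine ⟨Pi.single ⟨0, hk⟩ a, fun _ => b, ?_⟩
  rw [Fintype.sum_eq_single ⟨0, hk⟩, Pi.single_eq_same]
  intro i hi
  ext p
  simp [prodVec, Pi.single_eq_of_ne hi]

lemma exists_vinner_self_eq_one_and_schmidtRankLE (ι κ : Type*) [Fintype ι] [Fintype κ]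
    [Nonempty ι] [Nonempty κ] {k : ℕ} (hk : 1 ≤ k) :
    ∃ v : ι × κ → ℂ, vinner v v = 1 ∧ SchmidtRankLE k v := by
  classical
  obtain ⟨i⟩ := ‹Nonempty ι›
  obtain ⟨j⟩ := ‹Nonempty κ›
  refine ⟨prodVec (Pi.single i 1) (Pi.single j 1), ?_, schmidtRankLE_prodVec hk _ _⟩
  rw [vinner_prodVec]
  simp [vinner]

lemma vinner_smul_one_sub_mulVec [DecidableEq ι] (X : Matrix ι ι ℂ) (c : ℝ) (v w : ι → ℂ) :
    vinner v ((c • (1 : Matrix ι ι ℂ) - X) *ᵥ w) = c * vinner v w - vinner v (X *ᵥ w) := by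
  simp [vinner, sub_mulVec, smul_mulVec, dotProduct_sub, dotProduct_smul]

lemma kBlockPos_smul_one_sub_iff [DecidableEq ι] [DecidableEq κ] {k : ℕ}
    (X : Matrix (ι × κ) (ι × κ) ℂ) (c : ℝ) :
    KBlockPos k (c • (1 : Matrix (ι × κ) (ι × κ) ℂ) - X) ↔
      ∀ v : ι × κ → ℂ, vinner v v = 1 → SchmidtRankLE k v → (vinner v (X *ᵥ v)).re ≤ c := by
  refine forall₂_congr fun v hv => forall_congr' fun _ => ?_
  rw [vinner_smul_one_sub_mulVec, hv, mul_one, Complex.sub_re, Complex.ofReal_re, sub_nonneg]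

lemma kBlockPos_smul_one_sub_iff_prodRad_le [DecidableEq ι] [DecidableEq κ]
    [Nonempty ι] [Nonempty κ] {k : ℕ} (hk : 1 ≤ k)
    {X : Matrix (ι × κ) (ι × κ) ℂ} (hX : X.PosSemidef) (c : ℝ) :
    KBlockPos k (c • (1 : Matrix (ι × κ) (ι × κ) ℂ) - X) ↔ prodRad k X ≤ c := by
  rw [kBlockPos_smul_one_sub_iff]
  constructor
  · intro hre
    -- Since `sSup ∅ = 0`, a negative `c` has to be excluded by exhibiting a unit vector.
    obtain ⟨u, hu, hku⟩ := exists_vinner_self_eq_one_and_schmidtRankLE ι κ hk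
    refine csSup_le ⟨_, u, hu, hku, rfl⟩ ?_
    rintro _ ⟨v, hv, hkv, rfl⟩
    exact (norm_vinner_mulVec_self_eq_re hX v).trans_le (hre v hv hkv)
  · intro hc v hv hkv
    exact (Complex.re_le_norm _).trans ((norm_vinner_mulVec_self_le_prodRad X hv hkv).trans hc)

theorem kBlockPos_iff_SkNorm_le_general [DecidableEq ι] [DecidableEq κ]
    [Nonempty ι] [Nonempty κ] {k : ℕ} (hk : 1 ≤ k)
    (X : Matrix (ι × κ) (ι × κ) ℂ) (hX : X.PosSemidef) (c : ℝ) :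
    (KBlockPos k (c • (1 : Matrix (ι × κ) (ι × κ) ℂ) - X) ↔ SkNorm k X ≤ c) ∧
    (KBlockPos k (c • (1 : Matrix (ι × κ) (ι × κ) ℂ) - X) ↔ prodRad k X ≤ c) := by
  rw [SkNorm_eq_prodRad k hX]
  exact ⟨kBlockPos_smul_one_sub_iff_prodRad_le hk hX c,
    kBlockPos_smul_one_sub_iff_prodRad_le hk hX c⟩

/-- for `Y = c·I - X` Hermitian with `X` positive semidefinite, the following are
equivalent: (a) `Y` is k-block positive; (b) `c ≥ ‖X‖_{S(k)}`; (c) `c ≥ r_k^⊗(X)`. -/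
theorem kBlockPos_iff_SkNorm_le {m n k : ℕ} (hk1 : 1 ≤ k) (hk : k ≤ min m n)
    (X : Matrix (Fin m × Fin n) (Fin m × Fin n) ℂ) (hX : X.PosSemidef) (c : ℝ) :
    (KBlockPos k (c • (1 : Matrix (Fin m × Fin n) (Fin m × Fin n) ℂ) - X) ↔ SkNorm k X ≤ c) ∧
    (KBlockPos k (c • (1 : Matrix (Fin m × Fin n) (Fin m × Fin n) ℂ) - X) ↔ prodRad k X ≤ c) := by
  have := Fin.pos_iff_nonempty.mp (hk1.trans (le_min_iff.mp hk).1)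
  have := Fin.pos_iff_nonempty.mp (hk1.trans (le_min_iff.mp hk).2)
  exact kBlockPos_iff_SkNorm_le_general hk1 X hX c

end Ent
end
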